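/- Let (M, d) be a nonempty proper metric space (every closed bounded subset is compact), let f : M → ℝ be continuous, let C ∈ ℝ, ε > 0, and let I be a positive integer. Assume: (i) there exists p ∈ M with f(p) > C; (ii) every finite subset F ⊆ M such that f(q) > C for all q ∈ F and d(q, q′) ≥ ε for all distinct q, q′ ∈ F has at most I elements. Then there exist an integer k with 1 ≤ k ≤ I and points q_1, …, q_k ∈ M such that: (a) d(q_i, q_j) ≥ ε for all i ≠ j; (b) f(q_i) > C for every i ∈ {1,…,k}; (c) f(q_1) ≥ f(x) for every x ∈ M, and for each i ∈ {2,…,k}, f(q_i) ≥ f(x) for every x ∈ M satisfying d(x, q_j) ≥ ε for all j < i; (d) f(x) ≤ C for every x ∈ M satisfying d(x, q_j) ≥ ε for all j ∈ {1,…,k}. In particular, f is bounded above on M. -/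

import Mathlib

/-- A predicate on `ℕ` holding at `0` and only up to `N` holds at some last `n`. -/
theorem exists_and_not_succ_of_bounded {P : ℕ → Prop} {N : ℕ} (h0 : P 0)
    (hN : ∀ n, P n → n ≤ N) : ∃ n, P n ∧ ¬ P (n + 1) := by
  by_contra! h
  have hall : ∀ n, P n := fun n => Nat.rec h0 h n
  exact absurd (hN _ (hall (N + 1))) (by omega)

/-- A set whose finite `ε`-separated subsets have uniformly bounded cardinality is bounded. -/
theorem isBounded_of_card_separated_le {M : Type*} [PseudoMetricSpace M] {s : Set M} {ε : ℝ}
    (hε : 0 < ε) {N : ℕ}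
    (hsep : ∀ F : Finset M, (∀ q ∈ F, q ∈ s) →
      (∀ q ∈ F, ∀ q' ∈ F, q ≠ q' → ε ≤ dist q q') → F.card ≤ N) :
    Bornology.IsBounded s := by
  classical
  obtain ⟨n, ⟨F, hFn, hFs, hFd⟩, hmax⟩ := exists_and_not_succ_of_bounded
    (P := fun n => ∃ F : Finset M, F.card = n ∧ (∀ q ∈ F, q ∈ s) ∧
      (∀ q ∈ F, ∀ q' ∈ F, q ≠ q' → ε ≤ dist q q')) (N := N)
    ⟨∅, by simp⟩ (by rintro _ ⟨F, rfl, hs, hd⟩; exact hsep F hs hd)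
  refine ((Bornology.isBounded_biUnion_finset F).2
    fun q _ => Metric.isBounded_ball (x := q) (r := ε)).subset fun x hx => ?_
  by_contra hcover
  have hfar : ∀ q ∈ F, ε ≤ dist x q := by simpa using hcover
  have hxF : x ∉ F := fun h => by
    have := hfar x h
    rw [dist_self] at this
    linarith
  refine hmax ⟨insert x F, by rw [Finset.card_insert_of_notMem hxF, hFn], ?_, ?_⟩
  · simpa [hx] using hFs
  · intro a ha b hb hab
    rcases Finset.mem_insert.1 ha with rfl | haF <;>
      rcases Finset.mem_insert.1 hb with rfl | hbF
    · exact absurd rfl hab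
    · exact hfar b hbF
    · rw [dist_comm]
      exact hfar a haF
    · exact hFd a haF b hbF hab

/-- A continuous function with a bounded strict superlevel set `{C < f}` attains its maximum on
every closed set meeting that superlevel set. -/
theorem IsClosed.exists_isMaxOn_of_isBounded_superlevel {M : Type*} [PseudoMetricSpace M]
    [ProperSpace M] {f : M → ℝ} (hf : Continuous f) {C : ℝ}
    (hbdd : Bornology.IsBounded {x | C < f x}) {s : Set M} (hs : IsClosed s) {p : M}
    (hp : p ∈ s) (hpC : C < f p) : ∃ q ∈ s, C < f q ∧ IsMaxOn f s q := by
  obtain ⟨q, hq, hmax⟩ := (hbdd.isCompact_closure.inter_left hs).exists_isMaxOn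
    ⟨p, hp, subset_closure hpC⟩ hf.continuousOn
  have hpq : f p ≤ f q := hmax ⟨hp, subset_closure hpC⟩
  refine ⟨q, hq.1, hpC.trans_le hpq, fun x hx => ?_⟩
  rcases lt_or_ge C (f x) with h | h
  · exact hmax ⟨hx, subset_closure h⟩
  · exact h.trans (hpC.le.trans hpq)

/-- `q` lists points of `{C < f}` at mutual distance at least `ε`, each maximizing `f` among the
points at distance at least `ε` from its predecessors. -/
def IsSuccessiveMaxima {M : Type*} [PseudoMetricSpace M] (f : M → ℝ) (C ε : ℝ) {k : ℕ}
    (q : Fin k → M) : Prop :=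
  (∀ i j : Fin k, i ≠ j → ε ≤ dist (q i) (q j)) ∧
    (∀ i : Fin k, C < f (q i)) ∧
    ∀ i : Fin k, ∀ x : M, (∀ j : Fin k, j < i → ε ≤ dist x (q j)) → f x ≤ f (q i)

theorem IsSuccessiveMaxima.snoc {M : Type*} [PseudoMetricSpace M] {f : M → ℝ} {C ε : ℝ} {k : ℕ}
    {q : Fin k → M} (hq : IsSuccessiveMaxima f C ε q) {y : M} (hfar : ∀ i, ε ≤ dist y (q i))
    (hy : C < f y) (hmax : ∀ x, (∀ i, ε ≤ dist x (q i)) → f x ≤ f y) :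
    IsSuccessiveMaxima f C ε (Fin.snoc q y : Fin (k + 1) → M) := by
  obtain ⟨hdist, hC, hgreedy⟩ := hq
  refine ⟨fun i j => ?_, fun i => ?_, fun i x => ?_⟩
  · induction i using Fin.lastCases <;> induction j using Fin.lastCases
    · simp
    · exact fun _ => by simpa using hfar _
    · exact fun _ => by simpa [dist_comm] using hfar _
    · simpa using hdist _ _
  · induction i using Fin.lastCases
    · simpa using hy
    · simpa using hC _
  · intro hx
    induction i using Fin.lastCases with
    | last => simpa using hmax x fun j => by simpa using hx j.castSucc (Fin.castSucc_lt_last j)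
    | cast i =>
      simpa using hgreedy i x fun j hj => by simpa using hx j.castSucc (by simpa using hj)

/-- Abstract metric-space content of Lemma 5.2 of the paper: on a nonempty proper
metric space, a continuous function `f` that exceeds the threshold `C` somewhere,
and such that any `ε`-separated finite set of points where `f > C` has at most `I`
elements, admits `k ≤ I` points of "successive maxima" with `f ≤ C` off the union
of the `ε`-balls around them; in particular `f` is bounded above. -/
theorem stmt_4 {M : Type*} [MetricSpace M] [ProperSpace M] [Nonempty M]
    (f : M → ℝ) (hf : Continuous f) (C ε : ℝ) (hε : 0 < ε) (I : ℕ) (hI : 1 ≤ I)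
    (hexists : ∃ p : M, C < f p)
    (hsep : ∀ F : Finset M, (∀ q ∈ F, C < f q) →
      (∀ q ∈ F, ∀ q' ∈ F, q ≠ q' → ε ≤ dist q q') → F.card ≤ I) :
    ∃ (k : ℕ) (q : Fin k → M), 1 ≤ k ∧ k ≤ I ∧
      (∀ i j : Fin k, i ≠ j → ε ≤ dist (q i) (q j)) ∧
      (∀ i : Fin k, C < f (q i)) ∧
      (∀ i : Fin k, ∀ x : M, (∀ j : Fin k, j < i → ε ≤ dist x (q j)) → f x ≤ f (q i)) ∧
      (∀ x : M, (∀ i : Fin k, ε ≤ dist x (q i)) → f x ≤ C) ∧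
      (∃ B : ℝ, ∀ x : M, f x ≤ B) := by
  have hbdd : Bornology.IsBounded {x | C < f x} := isBounded_of_card_separated_le hε hsep
  have hcard : ∀ n, (∃ q : Fin n → M, IsSuccessiveMaxima f C ε q) → n ≤ I := by
    rintro n ⟨q, hdist, hC, -⟩
    have hinj : Function.Injective q := fun i j hij => by
      by_contra hne
      have := hdist i j hne
      rw [hij, dist_self] at this
      linarith
    have := hsep (Finset.univ.map ⟨q, hinj⟩) (by simpa using hC) (by
      simp only [Finset.mem_map, Finset.mem_univ, true_and, Function.Embedding.coeFn_mk]
      rintro _ ⟨i, rfl⟩ _ ⟨j, rfl⟩ hne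
      exact hdist i j fun h => hne (congrArg q h))
    simpa using this
  obtain ⟨k, ⟨q, hq⟩, hlast⟩ := exists_and_not_succ_of_bounded
    (P := fun n => ∃ q : Fin n → M, IsSuccessiveMaxima f C ε q)
    ⟨Fin.elim0, fun i => i.elim0, fun i => i.elim0, fun i => i.elim0⟩ hcard
  have hoff : ∀ x : M, (∀ i : Fin k, ε ≤ dist x (q i)) → f x ≤ C := by
    intro x hx
    by_contra! hxC
    have hclosed : IsClosed {x : M | ∀ i, ε ≤ dist x (q i)} := by
      simp only [Set.ofPred_forall]
      exact isClosed_iInter fun i =>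
        isClosed_le continuous_const (continuous_id.dist continuous_const)
    obtain ⟨y, hfar, hy, hmax⟩ :=
      hclosed.exists_isMaxOn_of_isBounded_superlevel hf hbdd hx hxC
    exact hlast ⟨_, hq.snoc hfar hy fun z hz => hmax hz⟩
  have hk : 1 ≤ k := by
    obtain ⟨p, hp⟩ := hexists
    by_contra! hk
    obtain rfl : k = 0 := by omega
    exact absurd (hoff p fun i => i.elim0) (not_le.2 hp)
  exact ⟨k, q, hk, hcard k ⟨q, hq⟩, hq.1, hq.2.1, hq.2.2, hoff, f (q ⟨0, hk⟩),
    fun x => hq.2.2 ⟨0, hk⟩ x fun j hj => absurd hj (Nat.not_lt_zero j)⟩
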